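/- Under the Tanner graph setup, if the girth g of G satisfies g ≥ 4 (which always holds for a simple bipartite graph), then the number of 6-cycles satisfies N_6 = −2(q1+q2)·N_4 + (T_3 − |E|·A_6)/6, where A_6 = (q1+q2+1)² + q1·q2; equivalently trace((H Hᵀ)³) = 6·N_6 + 12(q1+q2)·N_4 + |E|·A_6. -/

import Mathlib

/-!
`trace ((H Hᵀ)³)` counts closed walks of length 6 based at check nodes. With `K = H Hᵀ`, the
entry `K i i'` is the number of common neighbours of the check nodes `i, i'`; it equals
`q2 + 1` on the diagonal, and the entries of `K` sum to `m (q2 + 1) (q1 + 1)`.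

Rooted cycles of length `2k` correspond, two to one, to cyclic sequences of distinct check and
variable nodes starting at a check node (`cycleCount_four`, `cycleCount_six`). For fixed
distinct check nodes, inclusion–exclusion over coincidences of the variable nodes gives
`K² - K` choices for a 4-cycle and `K₁₂ K₂₃ K₁₃ - P (K₁₂ + K₂₃ + K₁₃) + 2 P` choices for a
6-cycle, where `P` is the number of common neighbours of the three check nodes
(`card_checkCycle4`, `card_checkCycle6`). Summing these over distinct check nodes, with the
regularity of rows and columns, expresses both counts through `trace (K³)` and `∑ K²`;
eliminating `∑ K²` yields the formula (`trace_cube_eq`).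
-/

open Matrix Finset

/-- The Tanner graph of a real matrix `H`: the simple bipartite graph on `α ⊕ β`
in which check node `i` is adjacent to variable node `j` iff `H i j = 1`. -/
def tannerGraph {α β : Type*} (H : Matrix α β ℝ) : SimpleGraph (α ⊕ β) :=
  SimpleGraph.fromRel (fun u v => ∃ i j, u = Sum.inl i ∧ v = Sum.inr j ∧ H i j = 1)

/-- The number of pairs `(v, w)` where `w` is a closed walk of length `l` based at `v`
that is a cycle. -/
noncomputable def cycleCount {V : Type*} (G : SimpleGraph V) (l : ℕ) : ℕ :=
  Nat.card {p : Σ v : V, G.Walk v v // p.2.length = l ∧ p.2.IsCycle}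

/-- `N_{2k}`: the number of cycles of length `2k` in `G`, as a real number. -/
noncomputable def numCycles {V : Type*} (G : SimpleGraph V) (k : ℕ) : ℝ :=
  (cycleCount G (2 * k) : ℝ) / (4 * k)

/-! ### Rooted cycles as tuples of nodes -/

section Adjacency

variable {α β : Type*} (H : Matrix α β ℝ)

lemma tannerGraph_adj_inl_inr (i : α) (j : β) :
    (tannerGraph H).Adj (Sum.inl i) (Sum.inr j) ↔ H i j = 1 := by
  simp [tannerGraph]

lemma tannerGraph_adj_inr_inl (i : α) (j : β) :
    (tannerGraph H).Adj (Sum.inr j) (Sum.inl i) ↔ H i j = 1 := by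
  simp [tannerGraph]

lemma tannerGraph_adj_inl_inl (i i' : α) :
    ¬ (tannerGraph H).Adj (Sum.inl i) (Sum.inl i') := by
  simp [tannerGraph]

lemma tannerGraph_adj_inr_inr (j j' : β) :
    ¬ (tannerGraph H).Adj (Sum.inr j) (Sum.inr j') := by
  simp [tannerGraph]

end Adjacency

/-- Rooted oriented 4-cycles `i₁ j₁ i₂ j₂` of the Tanner graph that start at a check node,
encoded as `(i₁, i₂, j₁, j₂)`. -/
abbrev CheckCycle4 {α β : Type*} (H : Matrix α β ℝ) : Type _ :=
  {t : α × α × β × β //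
    (H t.1 t.2.2.1 = 1 ∧ H t.2.1 t.2.2.1 = 1 ∧ H t.2.1 t.2.2.2 = 1 ∧ H t.1 t.2.2.2 = 1) ∧
    t.1 ≠ t.2.1 ∧ t.2.2.1 ≠ t.2.2.2}

/-- Rooted oriented 6-cycles `i₁ j₁ i₂ j₂ i₃ j₃` of the Tanner graph that start at a check
node, encoded as `(i₁, i₂, i₃, j₁, j₂, j₃)`. -/
abbrev CheckCycle6 {α β : Type*} (H : Matrix α β ℝ) : Type _ :=
  {t : α × α × α × β × β × β //
    (H t.1 t.2.2.2.1 = 1 ∧ H t.2.1 t.2.2.2.1 = 1 ∧ H t.2.1 t.2.2.2.2.1 = 1 ∧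
      H t.2.2.1 t.2.2.2.2.1 = 1 ∧ H t.2.2.1 t.2.2.2.2.2 = 1 ∧ H t.1 t.2.2.2.2.2 = 1) ∧
    (t.1 ≠ t.2.1 ∧ t.2.1 ≠ t.2.2.1 ∧ t.1 ≠ t.2.2.1) ∧
    t.2.2.2.1 ≠ t.2.2.2.2.1 ∧ t.2.2.2.2.1 ≠ t.2.2.2.2.2 ∧ t.2.2.2.1 ≠ t.2.2.2.2.2}

/-- A rooted 4-cycle starts at a check node or at a variable node; a rotation by one step
identifies the second kind with the first. -/
lemma cycleCount_four {α β : Type*} [Finite α] [Finite β] (H : Matrix α β ℝ) :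
    cycleCount (tannerGraph H) 4 = 2 * Nat.card (CheckCycle4 H) := by
  have A := tannerGraph_adj_inl_inr H
  have B := tannerGraph_adj_inr_inl H
  have C := tannerGraph_adj_inl_inl H
  have D := tannerGraph_adj_inr_inr H
  let f : CheckCycle4 H → {p : Σ v : α ⊕ β, (tannerGraph H).Walk v v //
      p.2.length = 4 ∧ p.2.IsCycle} := fun ⟨⟨i1, i2, j1, j2⟩, ⟨h1, h2, h3, h4⟩, hi, hj⟩ =>
    ⟨⟨Sum.inl i1, .cons ((A i1 j1).2 h1) (.cons ((B i2 j1).2 h2) (.cons ((A i2 j2).2 h3)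
      (.cons ((B i1 j2).2 h4) .nil)))⟩, by
      dsimp only at hi hj
      simp [SimpleGraph.Walk.isCycle_def, SimpleGraph.Walk.isTrail_def]
      grind⟩
  let g : CheckCycle4 H → {p : Σ v : α ⊕ β, (tannerGraph H).Walk v v //
      p.2.length = 4 ∧ p.2.IsCycle} := fun ⟨⟨i1, i2, j1, j2⟩, ⟨h1, h2, h3, h4⟩, hi, hj⟩ =>
    ⟨⟨Sum.inr j1, .cons ((B i2 j1).2 h2) (.cons ((A i2 j2).2 h3)
      (.cons ((B i1 j2).2 h4) (.cons ((A i1 j1).2 h1) .nil)))⟩, by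
      dsimp only at hi hj
      simp [SimpleGraph.Walk.isCycle_def, SimpleGraph.Walk.isTrail_def]
      grind⟩
  have hbij : Function.Bijective (Sum.elim f g) := by
    constructor
    · rintro (⟨⟨i1, i2, j1, j2⟩, ⟨h1, h2, h3, h4⟩, hi, hj⟩ |
          ⟨⟨i1, i2, j1, j2⟩, ⟨h1, h2, h3, h4⟩, hi, hj⟩)
        (⟨⟨i1', i2', j1', j2'⟩, ⟨h1', h2', h3', h4'⟩, hi', hj'⟩ |
          ⟨⟨i1', i2', j1', j2'⟩, ⟨h1', h2', h3', h4'⟩, hi', hj'⟩) h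
      all_goals
        -- the support list of a walk determines the tuple
        have h' := congrArg (fun p => p.1.2.support) h
        simp [f, g] at h'
        try simp [h']
    · rintro ⟨⟨v, w⟩, hl, hc⟩
      dsimp only at hl hc
      rcases w with _ | @⟨_, v1, _, a1, _ | @⟨_, v2, _, a2, _ | @⟨_, v3, _, a3,
        _ | @⟨_, v4, _, a4, _ | @⟨_, v5, _, a5, w⟩⟩⟩⟩⟩ <;> simp at hl
      rcases v with i1 | j1
      · rcases v1 with _ | j1
        · exact absurd a1 (C _ _)
        rcases v2 with i2 | _
        swap
        · exact absurd a2 (D _ _)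
        rcases v3 with _ | j2
        · exact absurd a3 (C _ _)
        have hd : i1 ≠ i2 ∧ j1 ≠ j2 := by
          have := hc.support_nodup
          simp at this
          grind
        exact ⟨Sum.inl ⟨⟨i1, i2, j1, j2⟩, ⟨(A _ _).1 a1, (B _ _).1 a2, (A _ _).1 a3,
          (B _ _).1 a4⟩, hd.1, hd.2⟩, rfl⟩
      · rcases v1 with i2 | _
        swap
        · exact absurd a1 (D _ _)
        rcases v2 with _ | j2
        · exact absurd a2 (C _ _)
        rcases v3 with i1 | _
        swap
        · exact absurd a3 (D _ _)
        have hd : i1 ≠ i2 ∧ j1 ≠ j2 := by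
          have := hc.support_nodup
          simp at this
          grind
        exact ⟨Sum.inr ⟨⟨i1, i2, j1, j2⟩, ⟨(A _ _).1 a4, (B _ _).1 a1, (A _ _).1 a2,
          (B _ _).1 a3⟩, hd.1, hd.2⟩, rfl⟩
  rw [cycleCount, ← Nat.card_congr (Equiv.ofBijective _ hbij), Nat.card_sum, two_mul]

/-- A rooted 6-cycle starts at a check node or at a variable node; a rotation by one step
identifies the second kind with the first. -/
lemma cycleCount_six {α β : Type*} [Finite α] [Finite β] (H : Matrix α β ℝ) :
    cycleCount (tannerGraph H) 6 = 2 * Nat.card (CheckCycle6 H) := by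
  have A := tannerGraph_adj_inl_inr H
  have B := tannerGraph_adj_inr_inl H
  have C := tannerGraph_adj_inl_inl H
  have D := tannerGraph_adj_inr_inr H
  let f : CheckCycle6 H → {p : Σ v : α ⊕ β, (tannerGraph H).Walk v v //
      p.2.length = 6 ∧ p.2.IsCycle} :=
    fun ⟨⟨i1, i2, i3, j1, j2, j3⟩, ⟨h1, h2, h3, h4, h5, h6⟩, hi, hj⟩ =>
    ⟨⟨Sum.inl i1, .cons ((A i1 j1).2 h1) (.cons ((B i2 j1).2 h2) (.cons ((A i2 j2).2 h3)
      (.cons ((B i3 j2).2 h4) (.cons ((A i3 j3).2 h5) (.cons ((B i1 j3).2 h6) .nil)))))⟩, by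
      dsimp only at hi hj
      simp [SimpleGraph.Walk.isCycle_def, SimpleGraph.Walk.isTrail_def]
      grind⟩
  let g : CheckCycle6 H → {p : Σ v : α ⊕ β, (tannerGraph H).Walk v v //
      p.2.length = 6 ∧ p.2.IsCycle} :=
    fun ⟨⟨i1, i2, i3, j1, j2, j3⟩, ⟨h1, h2, h3, h4, h5, h6⟩, hi, hj⟩ =>
    ⟨⟨Sum.inr j1, .cons ((B i2 j1).2 h2) (.cons ((A i2 j2).2 h3) (.cons ((B i3 j2).2 h4)
      (.cons ((A i3 j3).2 h5) (.cons ((B i1 j3).2 h6) (.cons ((A i1 j1).2 h1) .nil)))))⟩, by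
      dsimp only at hi hj
      simp [SimpleGraph.Walk.isCycle_def, SimpleGraph.Walk.isTrail_def]
      grind⟩
  have hbij : Function.Bijective (Sum.elim f g) := by
    constructor
    · rintro (⟨⟨i1, i2, i3, j1, j2, j3⟩, ⟨h1, h2, h3, h4, h5, h6⟩, hi, hj⟩ |
          ⟨⟨i1, i2, i3, j1, j2, j3⟩, ⟨h1, h2, h3, h4, h5, h6⟩, hi, hj⟩)
        (⟨⟨i1', i2', i3', j1', j2', j3'⟩, ⟨h1', h2', h3', h4', h5', h6'⟩, hi', hj'⟩ |
          ⟨⟨i1', i2', i3', j1', j2', j3'⟩, ⟨h1', h2', h3', h4', h5', h6'⟩, hi', hj'⟩) h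
      all_goals
        -- the support list of a walk determines the tuple
        have h' := congrArg (fun p => p.1.2.support) h
        simp [f, g] at h'
        try simp [h']
    · rintro ⟨⟨v, w⟩, hl, hc⟩
      dsimp only at hl hc
      rcases w with _ | @⟨_, v1, _, a1, _ | @⟨_, v2, _, a2, _ | @⟨_, v3, _, a3,
        _ | @⟨_, v4, _, a4, _ | @⟨_, v5, _, a5, _ | @⟨_, v6, _, a6,
        _ | @⟨_, v7, _, a7, w⟩⟩⟩⟩⟩⟩⟩ <;> simp at hl
      rcases v with i1 | j1
      · rcases v1 with _ | j1
        · exact absurd a1 (C _ _)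
        rcases v2 with i2 | _
        swap
        · exact absurd a2 (D _ _)
        rcases v3 with _ | j2
        · exact absurd a3 (C _ _)
        rcases v4 with i3 | _
        swap
        · exact absurd a4 (D _ _)
        rcases v5 with _ | j3
        · exact absurd a5 (C _ _)
        have hd : (i1 ≠ i2 ∧ i2 ≠ i3 ∧ i1 ≠ i3) ∧
            j1 ≠ j2 ∧ j2 ≠ j3 ∧ j1 ≠ j3 := by
          have := hc.support_nodup
          simp at this
          grind
        exact ⟨Sum.inl ⟨⟨i1, i2, i3, j1, j2, j3⟩, ⟨(A _ _).1 a1, (B _ _).1 a2, (A _ _).1 a3,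
          (B _ _).1 a4, (A _ _).1 a5, (B _ _).1 a6⟩, hd.1, hd.2⟩, rfl⟩
      · rcases v1 with i2 | _
        swap
        · exact absurd a1 (D _ _)
        rcases v2 with _ | j2
        · exact absurd a2 (C _ _)
        rcases v3 with i3 | _
        swap
        · exact absurd a3 (D _ _)
        rcases v4 with _ | j3
        · exact absurd a4 (C _ _)
        rcases v5 with i1 | _
        swap
        · exact absurd a5 (D _ _)
        have hd : (i1 ≠ i2 ∧ i2 ≠ i3 ∧ i1 ≠ i3) ∧
            j1 ≠ j2 ∧ j2 ≠ j3 ∧ j1 ≠ j3 := by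
          have := hc.support_nodup
          simp at this
          grind
        exact ⟨Sum.inr ⟨⟨i1, i2, i3, j1, j2, j3⟩, ⟨(A _ _).1 a6, (B _ _).1 a1, (A _ _).1 a2,
          (B _ _).1 a3, (A _ _).1 a4, (B _ _).1 a5⟩, hd.1, hd.2⟩, rfl⟩
  rw [cycleCount, ← Nat.card_congr (Equiv.ofBijective _ hbij), Nat.card_sum, two_mul]

/-! ### Inclusion–exclusion -/

section Counting

variable {α β : Type*} [Fintype α] [Fintype β] [DecidableEq α] [DecidableEq β]
  (H : Matrix α β ℝ)

/-- For distinct check nodes `i, i'` the pairs of common neighbours number `K²`, with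
`K = (H Hᵀ) i i'`, and `K` of them are diagonal. -/
lemma card_checkCycle4 (hent : ∀ i j, H i j = 0 ∨ H i j = 1) :
    (Nat.card (CheckCycle4 H) : ℝ) =
      ∑ i, ∑ i', if i = i' then 0 else ((H * Hᵀ) i i' ^ 2 - (H * Hᵀ) i i') := by
  classical
  rw [Nat.card_eq_fintype_card, Fintype.card_subtype, Finset.card_filter]
  push_cast
  simp only [Fintype.sum_prod_type]
  refine Finset.sum_congr rfl fun i _ => Finset.sum_congr rfl fun i' _ => ?_
  split_ifs with h
  · simp [h]
  have key : ∀ j j', (if (H i j = 1 ∧ H i' j = 1 ∧ H i' j' = 1 ∧ H i j' = 1) ∧ i ≠ i' ∧ j ≠ j'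
      then (1 : ℝ) else 0) = (H i j * H i' j) * (H i j' * H i' j')
        - if j = j' then H i j * H i' j else 0 := by
    intro j j'
    rcases hent i j with a | a <;> rcases hent i' j with b | b <;>
      rcases hent i j' with c | c <;> rcases hent i' j' with d | d <;>
      by_cases e : j = j' <;> simp_all
  simp only [key, Finset.sum_sub_distrib, ← Finset.mul_sum, ← Finset.sum_mul]
  simp [Matrix.mul_apply, sq]

/-- Inclusion–exclusion over coincidences among `j₁, j₂, j₃`, for fixed distinct check nodes
`i₁, i₂, i₃` of a 0/1 matrix. -/
lemma card_checkCycle6 (hent : ∀ i j, H i j = 0 ∨ H i j = 1) :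
    (Nat.card (CheckCycle6 H) : ℝ) =
      ∑ i₁, ∑ i₂, ∑ i₃, if i₁ ≠ i₂ ∧ i₂ ≠ i₃ ∧ i₁ ≠ i₃ then
        ((H * Hᵀ) i₁ i₂ * (H * Hᵀ) i₂ i₃ * (H * Hᵀ) i₁ i₃
          - (∑ j, H i₁ j * H i₂ j * H i₃ j) *
            ((H * Hᵀ) i₁ i₂ + (H * Hᵀ) i₂ i₃ + (H * Hᵀ) i₁ i₃)
          + 2 * ∑ j, H i₁ j * H i₂ j * H i₃ j) else 0 := by
  classical
  rw [Nat.card_eq_fintype_card, Fintype.card_subtype, Finset.card_filter]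
  push_cast
  simp only [Fintype.sum_prod_type]
  refine Finset.sum_congr rfl fun i₁ _ => Finset.sum_congr rfl fun i₂ _ =>
    Finset.sum_congr rfl fun i₃ _ => ?_
  split_ifs with h
  swap
  · simp [h]
  have hsq : ∀ i j, H i j * H i j = H i j := by
    intro i j; rcases hent i j with a | a <;> simp [a]
  have key : ∀ j₁ j₂ j₃, (if (H i₁ j₁ = 1 ∧ H i₂ j₁ = 1 ∧ H i₂ j₂ = 1 ∧ H i₃ j₂ = 1 ∧
      H i₃ j₃ = 1 ∧ H i₁ j₃ = 1) ∧ (i₁ ≠ i₂ ∧ i₂ ≠ i₃ ∧ i₁ ≠ i₃) ∧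
      j₁ ≠ j₂ ∧ j₂ ≠ j₃ ∧ j₁ ≠ j₃ then (1 : ℝ) else 0) =
      (H i₁ j₁ * H i₂ j₁) * (H i₂ j₂ * H i₃ j₂) * (H i₁ j₃ * H i₃ j₃)
      - (if j₁ = j₂ then (H i₁ j₁ * H i₂ j₁ * H i₃ j₁) * (H i₁ j₃ * H i₃ j₃) else 0)
      - (if j₂ = j₃ then (H i₁ j₂ * H i₂ j₂ * H i₃ j₂) * (H i₁ j₁ * H i₂ j₁) else 0)
      - (if j₁ = j₃ then (H i₁ j₁ * H i₂ j₁ * H i₃ j₁) * (H i₂ j₂ * H i₃ j₂) else 0)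
      + (if j₁ = j₂ then if j₁ = j₃ then 2 * (H i₁ j₁ * H i₂ j₁ * H i₃ j₁) else 0 else 0) := by
    intro j₁ j₂ j₃
    by_cases e : j₁ = j₂
    · subst e
      by_cases e' : j₁ = j₃
      · subst e'
        simp
        rcases hent i₁ j₁ with a | a <;> rcases hent i₂ j₁ with b | b <;>
          rcases hent i₃ j₁ with c | c <;> norm_num [a, b, c]
      · simp [e']
        linear_combination (-H i₁ j₁ * H i₃ j₁ * H i₁ j₃ * H i₃ j₃) * hsq i₂ j₁
    · by_cases e' : j₂ = j₃
      · subst e'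
        simp [e]
        linear_combination (-H i₁ j₁ * H i₂ j₁ * H i₁ j₂ * H i₂ j₂) * hsq i₃ j₂
      · by_cases e'' : j₁ = j₃
        · subst e''
          simp [e, e']
          linear_combination (-H i₂ j₁ * H i₃ j₁ * H i₂ j₂ * H i₃ j₂) * hsq i₁ j₁
        · simp only [e, e', e'', if_false]
          rcases hent i₁ j₁ with a11 | a11
          · simp [a11]
          rcases hent i₂ j₁ with a21 | a21
          · simp [a21]
          rcases hent i₂ j₂ with a22 | a22
          · simp [a22]
          rcases hent i₃ j₂ with a32 | a32
          · simp [a32]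
          rcases hent i₃ j₃ with a33 | a33
          · simp [a33]
          rcases hent i₁ j₃ with a13 | a13
          · simp [a13]
          simp [*]
  simp only [key, Finset.sum_sub_distrib, Finset.sum_add_distrib]
  have s1 : ∑ j₁, ∑ j₂, ∑ j₃, (H i₁ j₁ * H i₂ j₁) * (H i₂ j₂ * H i₃ j₂) * (H i₁ j₃ * H i₃ j₃)
      = (H * Hᵀ) i₁ i₂ * (H * Hᵀ) i₂ i₃ * (H * Hᵀ) i₁ i₃ := by
    simp [Matrix.mul_apply, ← Finset.mul_sum, ← Finset.sum_mul]
  have s2 : ∑ j₁, ∑ j₂, ∑ j₃,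
      (if j₁ = j₂ then (H i₁ j₁ * H i₂ j₁ * H i₃ j₁) * (H i₁ j₃ * H i₃ j₃) else 0)
      = (∑ j, H i₁ j * H i₂ j * H i₃ j) * (H * Hᵀ) i₁ i₃ := by
    simp only [Matrix.mul_apply, Matrix.transpose_apply, Finset.sum_mul_sum]
    refine Finset.sum_congr rfl fun j₁ _ => ?_
    rw [Finset.sum_comm]
    simp
  have s3 : ∑ j₁, ∑ j₂, ∑ j₃,
      (if j₂ = j₃ then (H i₁ j₂ * H i₂ j₂ * H i₃ j₂) * (H i₁ j₁ * H i₂ j₁) else 0)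
      = (∑ j, H i₁ j * H i₂ j * H i₃ j) * (H * Hᵀ) i₁ i₂ := by
    rw [Finset.sum_comm]
    simp [Matrix.mul_apply, Finset.sum_mul_sum]
  have s4 : ∑ j₁, ∑ j₂, ∑ j₃,
      (if j₁ = j₃ then (H i₁ j₁ * H i₂ j₁ * H i₃ j₁) * (H i₂ j₂ * H i₃ j₂) else 0)
      = (∑ j, H i₁ j * H i₂ j * H i₃ j) * (H * Hᵀ) i₂ i₃ := by
    simp [Matrix.mul_apply, Finset.sum_mul_sum]
  have s5 : ∑ j₁, ∑ j₂, ∑ j₃,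
      (if j₁ = j₂ then if j₁ = j₃ then 2 * (H i₁ j₁ * H i₂ j₁ * H i₃ j₁) else 0 else 0)
      = 2 * ∑ j, H i₁ j * H i₂ j * H i₃ j := by
    rw [Finset.mul_sum]
    refine Finset.sum_congr rfl fun j₁ _ => ?_
    rw [Finset.sum_comm]
    simp
  rw [s1, s2, s3, s4, s5]
  ring

end Counting

/-! ### The trace formula -/

section Trace

variable {α β : Type*} [Fintype α] [Fintype β] [DecidableEq α]

/-- Inclusion–exclusion for a sum over triples of pairwise distinct indices. -/
lemma sum_distinct_triples (f : α → α → α → ℝ) :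
    (∑ i₁, ∑ i₂, ∑ i₃, if i₁ ≠ i₂ ∧ i₂ ≠ i₃ ∧ i₁ ≠ i₃ then f i₁ i₂ i₃ else 0) =
      ∑ i₁, ∑ i₂, ∑ i₃, f i₁ i₂ i₃ - ∑ i, ∑ k, f i i k - ∑ i, ∑ k, f i k k
        - ∑ i, ∑ k, f i k i + 2 * ∑ i, f i i i := by
  have key : ∀ i₁ i₂ i₃, (if i₁ ≠ i₂ ∧ i₂ ≠ i₃ ∧ i₁ ≠ i₃ then f i₁ i₂ i₃ else 0) =
      f i₁ i₂ i₃ - (if i₁ = i₂ then f i₁ i₁ i₃ else 0) - (if i₂ = i₃ then f i₁ i₂ i₂ else 0)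
        - (if i₁ = i₃ then f i₁ i₂ i₁ else 0)
        + (if i₁ = i₂ then if i₁ = i₃ then 2 * f i₁ i₁ i₁ else 0 else 0) := by
    intro i₁ i₂ i₃
    by_cases e : i₁ = i₂
    · subst e
      by_cases e' : i₁ = i₃
      · subst e'
        simp
        ring
      · simp [e']
    · by_cases e' : i₂ = i₃
      · subst e'
        simp [e]
      · by_cases e'' : i₁ = i₃
        · subst e''
          simp [e, e']
        · simp [e, e', e'']
  have s2 : ∀ i₁, ∑ i₂, ∑ i₃, (if i₁ = i₂ then f i₁ i₁ i₃ else 0) = ∑ k, f i₁ i₁ k := by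
    intro i₁
    rw [Finset.sum_comm]
    simp
  have s5 : ∀ i₁, ∑ i₂, ∑ i₃, (if i₁ = i₂ then if i₁ = i₃ then 2 * f i₁ i₁ i₁ else 0 else 0)
      = 2 * f i₁ i₁ i₁ := by
    intro i₁
    rw [Finset.sum_comm]
    simp
  simp only [key, Finset.sum_sub_distrib, Finset.sum_add_distrib, s2, s5, Finset.mul_sum]
  simp

/-- The matrix form of the count: `R` is the number of ones in each row, `C` in each column. -/
lemma trace_cube_eq [DecidableEq β] (H : Matrix α β ℝ) (R C : ℝ)
    (hent : ∀ i j, H i j = 0 ∨ H i j = 1)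
    (hcol : ∀ j, ∑ i, H i j = C) (hrow : ∀ i, ∑ j, H i j = R) :
    Matrix.trace ((H * Hᵀ) ^ 3) =
      (Nat.card (CheckCycle6 H) : ℝ) + 3 * (R + C - 2) * (Nat.card (CheckCycle4 H) : ℝ)
        + Fintype.card α * R * ((R + C - 1) ^ 2 + (C - 1) * (R - 1)) := by
  have hsq : ∀ i j, H i j * H i j = H i j := by
    intro i j; rcases hent i j with a | a <;> simp [a]
  set K := H * Hᵀ with hK
  have hKa : ∀ i k, K i k = ∑ j, H i j * H k j := fun i k => by simp [hK, Matrix.mul_apply]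
  have hdiag : ∀ i, K i i = R := fun i => by simp only [hKa, hsq, hrow]
  have hsymm : ∀ i k, K i k = K k i := fun i k => by simp only [hKa, mul_comm]
  have hKsum : ∑ i, ∑ k, K i k = Fintype.card α * (R * C) := by
    have : ∀ i, ∑ k, K i k = R * C := by
      intro i
      simp only [hKa]
      rw [Finset.sum_comm]
      simp only [← Finset.mul_sum, hcol, ← Finset.sum_mul, hrow]
    simp [this]
  -- `P i₁ i₂ i₃` counts the common neighbours of three check nodes
  set P : α → α → α → ℝ := fun i₁ i₂ i₃ => ∑ j, H i₁ j * H i₂ j * H i₃ j with hP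
  have hP1 : ∀ i k, P i i k = K i k := fun i k => by simp only [hP, hKa, hsq]
  have hP2 : ∀ i k, P i k k = K i k := fun i k => by simp only [hP, hKa, mul_assoc, hsq]
  have hP3 : ∀ i k, P i k i = K i k := fun i k => by
    simp only [hP, hKa, mul_right_comm, hsq]
  have hPs3 : ∀ i k, ∑ l, P i k l = C * K i k := by
    intro i k
    simp only [hP, hKa]
    rw [Finset.sum_comm]
    simp only [← Finset.mul_sum, hcol, ← Finset.sum_mul]
    ring
  have hP12 : ∀ i k l, P i k l = P k l i := fun i k l =>
    Finset.sum_congr rfl fun j _ => by ring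
  have hP23 : ∀ i k l, P i k l = P i l k := fun i k l =>
    Finset.sum_congr rfl fun j _ => by ring
  set S := ∑ i, ∑ k, K i k ^ 2 with hS
  have hT : Matrix.trace (K ^ 3) = ∑ i₁, ∑ i₂, ∑ i₃, K i₁ i₂ * K i₂ i₃ * K i₁ i₃ := by
    rw [pow_succ, sq, Matrix.trace]
    refine Finset.sum_congr rfl fun i _ => ?_
    simp only [Matrix.diag_apply, Matrix.mul_apply, Finset.sum_mul]
    rw [Finset.sum_comm]
    refine Finset.sum_congr rfl fun k _ => Finset.sum_congr rfl fun l _ => ?_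
    rw [hsymm l i]
  have h4 : (Nat.card (CheckCycle4 H) : ℝ) =
      S - Fintype.card α * (R * C) - Fintype.card α * (R ^ 2 - R) := by
    rw [card_checkCycle4 H hent, ← hK]
    have key : ∀ i k, (if i = k then 0 else (K i k ^ 2 - K i k)) =
        K i k ^ 2 - K i k - if i = k then R ^ 2 - R else 0 := by
      intro i k
      split_ifs with h
      · subst h
        rw [hdiag]
        ring
      · ring
    simp only [key, Finset.sum_sub_distrib, hKsum]
    simp [hS]
    ring
  have hA : (∑ i₁, ∑ i₂, ∑ i₃, if i₁ ≠ i₂ ∧ i₂ ≠ i₃ ∧ i₁ ≠ i₃ then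
      K i₁ i₂ * K i₂ i₃ * K i₁ i₃ else 0) =
      Matrix.trace (K ^ 3) - 3 * R * S + 2 * Fintype.card α * R ^ 3 := by
    rw [sum_distinct_triples, hT]
    have e1 : ∑ i, ∑ k, K i i * K i k * K i k = R * S := by
      simp only [hS, Finset.mul_sum, hdiag, mul_assoc, sq]
    have e2 : ∑ i, ∑ k, K i k * K k k * K i k = R * S := by
      simp only [hS, Finset.mul_sum, hdiag, sq]
      exact Finset.sum_congr rfl fun i _ => Finset.sum_congr rfl fun k _ => by ring
    have e3 : ∑ i, ∑ k, K i k * K k i * K i i = R * S := by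
      simp only [hS, Finset.mul_sum, hdiag, sq]
      exact Finset.sum_congr rfl fun i _ => Finset.sum_congr rfl fun k _ => by
        rw [hsymm k i]; ring
    have e4 : ∑ i, K i i * K i i * K i i = Fintype.card α * R ^ 3 := by
      simp only [hdiag, Finset.sum_const, Finset.card_univ, nsmul_eq_mul]
      ring
    rw [e1, e2, e3, e4]
    ring
  have hB12 : (∑ i₁, ∑ i₂, ∑ i₃, if i₁ ≠ i₂ ∧ i₂ ≠ i₃ ∧ i₁ ≠ i₃ then
      P i₁ i₂ i₃ * K i₁ i₂ else 0) =
      (C - 2) * S - Fintype.card α * R ^ 2 * (C - 2) := by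
    rw [sum_distinct_triples]
    have e0 : ∑ i₁, ∑ i₂, ∑ i₃, P i₁ i₂ i₃ * K i₁ i₂ = C * S := by
      simp only [← Finset.sum_mul, hPs3, hS, Finset.mul_sum]
      exact Finset.sum_congr rfl fun i _ => Finset.sum_congr rfl fun k _ => by ring
    have e1 : ∑ i, ∑ k, P i i k * K i i = Fintype.card α * (R * C) * R := by
      simp only [hP1, hdiag, ← Finset.sum_mul, hKsum]
    have e2 : ∑ i, ∑ k, P i k k * K i k = S := by
      simp only [hP2, hS, sq]
    have e3 : ∑ i, ∑ k, P i k i * K i k = S := by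
      simp only [hP3, hS, sq]
    have e4 : ∑ i, P i i i * K i i = Fintype.card α * R ^ 2 := by
      simp only [hP1, hdiag, Finset.sum_const, Finset.card_univ, nsmul_eq_mul]
      ring
    rw [e0, e1, e2, e3, e4]
    ring
  have hB23 : (∑ i₁, ∑ i₂, ∑ i₃, if i₁ ≠ i₂ ∧ i₂ ≠ i₃ ∧ i₁ ≠ i₃ then
      P i₁ i₂ i₃ * K i₂ i₃ else 0) =
      (C - 2) * S - Fintype.card α * R ^ 2 * (C - 2) := by
    rw [← hB12, Finset.sum_comm]
    refine Finset.sum_congr rfl fun i _ => ?_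
    rw [Finset.sum_comm]
    refine Finset.sum_congr rfl fun k _ => Finset.sum_congr rfl fun l _ => ?_
    rw [hP12 l i k]
    exact if_congr (by grind) rfl rfl
  have hB13 : (∑ i₁, ∑ i₂, ∑ i₃, if i₁ ≠ i₂ ∧ i₂ ≠ i₃ ∧ i₁ ≠ i₃ then
      P i₁ i₂ i₃ * K i₁ i₃ else 0) =
      (C - 2) * S - Fintype.card α * R ^ 2 * (C - 2) := by
    rw [← hB12]
    refine Finset.sum_congr rfl fun i _ => ?_
    rw [Finset.sum_comm]
    refine Finset.sum_congr rfl fun k _ => Finset.sum_congr rfl fun l _ => ?_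
    rw [hP23 i l k]
    exact if_congr (by grind) rfl rfl
  have hQ : (∑ i₁, ∑ i₂, ∑ i₃, if i₁ ≠ i₂ ∧ i₂ ≠ i₃ ∧ i₁ ≠ i₃ then P i₁ i₂ i₃ else 0) =
      (C - 3) * (Fintype.card α * (R * C)) + 2 * Fintype.card α * R := by
    rw [sum_distinct_triples]
    simp only [hPs3, hP1, hP2, hP3, hdiag, ← Finset.mul_sum, hKsum, Finset.sum_const,
      Finset.card_univ, nsmul_eq_mul]
    ring
  have h6 : (Nat.card (CheckCycle6 H) : ℝ) =
      (Matrix.trace (K ^ 3) - 3 * R * S + 2 * Fintype.card α * R ^ 3)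
      - 3 * ((C - 2) * S - Fintype.card α * R ^ 2 * (C - 2))
      + 2 * ((C - 3) * (Fintype.card α * (R * C)) + 2 * Fintype.card α * R) := by
    have key : ∀ i₁ i₂ i₃, (if i₁ ≠ i₂ ∧ i₂ ≠ i₃ ∧ i₁ ≠ i₃ then
        (K i₁ i₂ * K i₂ i₃ * K i₁ i₃ - P i₁ i₂ i₃ * (K i₁ i₂ + K i₂ i₃ + K i₁ i₃)
          + 2 * P i₁ i₂ i₃) else 0) =
        (if i₁ ≠ i₂ ∧ i₂ ≠ i₃ ∧ i₁ ≠ i₃ then K i₁ i₂ * K i₂ i₃ * K i₁ i₃ else 0)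
        - (if i₁ ≠ i₂ ∧ i₂ ≠ i₃ ∧ i₁ ≠ i₃ then P i₁ i₂ i₃ * K i₁ i₂ else 0)
        - (if i₁ ≠ i₂ ∧ i₂ ≠ i₃ ∧ i₁ ≠ i₃ then P i₁ i₂ i₃ * K i₂ i₃ else 0)
        - (if i₁ ≠ i₂ ∧ i₂ ≠ i₃ ∧ i₁ ≠ i₃ then P i₁ i₂ i₃ * K i₁ i₃ else 0)
        + 2 * (if i₁ ≠ i₂ ∧ i₂ ≠ i₃ ∧ i₁ ≠ i₃ then P i₁ i₂ i₃ else 0) := by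
      intro i₁ i₂ i₃
      split_ifs <;> ring
    rw [card_checkCycle6 H hent]
    change (∑ i₁, ∑ i₂, ∑ i₃, if i₁ ≠ i₂ ∧ i₂ ≠ i₃ ∧ i₁ ≠ i₃ then
        (K i₁ i₂ * K i₂ i₃ * K i₁ i₃ - P i₁ i₂ i₃ * (K i₁ i₂ + K i₂ i₃ + K i₁ i₃)
          + 2 * P i₁ i₂ i₃) else 0) = _
    simp only [key, Finset.sum_sub_distrib, Finset.sum_add_distrib, ← Finset.mul_sum]
    rw [hA, hB12, hB23, hB13, hQ]
    ring
  rw [h6, h4]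
  ring

end Trace

/-- Counting the ones in a 0/1 vector. -/
lemma sum_eq_card_ones {ι : Type*} [Fintype ι] (x : ι → ℝ) (h : ∀ i, x i = 0 ∨ x i = 1) :
    ∑ i, x i = Nat.card {i // x i = 1} := by
  classical
  rw [Nat.card_eq_fintype_card, Fintype.card_subtype, Finset.card_filter]
  push_cast
  refine Finset.sum_congr rfl fun i _ => ?_
  rcases h i with a | a <;> simp [a]

/-- Corollary 4(1), second formula: the number of 6-cycles `N_6` in terms of `N_4` and
`T_3 = trace((H Hᵀ)³)`, where `A_6 = (q1+q2+1)² + q1·q2`. -/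
theorem six_cycles
    (q1 q2 m n : ℕ) (hq1 : 1 ≤ q1) (hq12 : q1 ≤ q2) (hq2 : 2 ≤ q2)
    (hm : 0 < m) (hn : 0 < n)
    (H : Matrix (Fin m) (Fin n) ℝ)
    (hent : ∀ i j, H i j = 0 ∨ H i j = 1)
    (hcol : ∀ j, Nat.card {i : Fin m // H i j = 1} = q1 + 1)
    (hrow : ∀ i, Nat.card {j : Fin n // H i j = 1} = q2 + 1)
    (hconn : (tannerGraph H).Connected)
    (hg : (4 : ℕ∞) ≤ (tannerGraph H).egirth) :
    numCycles (tannerGraph H) 3 =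
      -2 * ((q1 : ℝ) + q2) * numCycles (tannerGraph H) 2
      + (Matrix.trace ((H * H.transpose) ^ 3)
          - ((n * (q1 + 1) : ℕ) : ℝ) * (((q1 : ℝ) + q2 + 1) ^ 2 + (q1 : ℝ) * q2)) / 6
    ∧ Matrix.trace ((H * H.transpose) ^ 3) =
        6 * numCycles (tannerGraph H) 3 + 12 * ((q1 : ℝ) + q2) * numCycles (tannerGraph H) 2
        + ((n * (q1 + 1) : ℕ) : ℝ) * (((q1 : ℝ) + q2 + 1) ^ 2 + (q1 : ℝ) * q2) := by
  have hR : ∀ i, ∑ j, H i j = (q2 : ℝ) + 1 := fun i => by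
    rw [sum_eq_card_ones (fun j => H i j) (hent i), hrow i]
    push_cast
    ring
  have hC : ∀ j, ∑ i, H i j = (q1 : ℝ) + 1 := fun j => by
    rw [sum_eq_card_ones (fun i => H i j) (fun i => hent i j), hcol j]
    push_cast
    ring
  have hE : (m : ℝ) * (q2 + 1) = n * (q1 + 1) := by
    have := Finset.sum_comm (s := Finset.univ) (t := Finset.univ) (f := fun i j => H i j)
    simpa [hR, hC, mul_add] using this
  have hT := trace_cube_eq H _ _ hent hC hR
  rw [Fintype.card_fin] at hT
  -- a cycle of length `2k` has `k` roots among the check nodes and two orientations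
  have h6 : (Nat.card (CheckCycle6 H) : ℝ) = 6 * numCycles (tannerGraph H) 3 := by
    rw [numCycles, cycleCount_six]
    push_cast
    ring
  have h4 : (Nat.card (CheckCycle4 H) : ℝ) = 4 * numCycles (tannerGraph H) 2 := by
    rw [numCycles, cycleCount_four]
    push_cast
    ring
  rw [h6, h4, hE] at hT
  push_cast
  constructor <;> rw [hT] <;> ring
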